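/- arXiv:2202.01269 — 4 statements merged into one kernel-verified Lean document; each statement's English description precedes it below -/
import Mathlib

section
/- Let T : ℝ → ℝ be a function and a, b ∈ ℝ be such that x ↦ a·T(x) + b is the cumulative distribution function of a real-valued random variable Z, and assume the law of Z belongs to the resilience family 𝒢_mean(ρ_Z) on ℝ. Let p and q be two probability distributions on ℝ (with finite first moments) such that sup_{t ∈ ℝ} |E_{X∼p}[T(X + t)] − E_{X∼q}[T(X + t)]| ≤ ε, where |a|·ε < 1. Then there exist probability distributions r_p and r_q with r_p ≤ p/(1 − |a|ε) and r_q ≤ q/(1 − |a|ε) such that E_{r_q}[X] − E_{r_p}[X] ≤ 2·ρ_Z(|a|ε). -/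
/-!
Put `η = |a| ε` and let `W = Z - X` with `Z` independent of `X`. Averaging the distribution function
of `Z` over translates shows that `E_p[a T(X + t) + b]` is the distribution function of `W` at `t`
when `X ∼ p`, so passing from `p` to `q` raises it by at most `η`. In terms of quantile functions
this reads `F_p⁻¹(u) ≤ F_q⁻¹(u + η)`. Hence the lowest `1 - η` fraction of `W` under `p` has a mean
at most that of the highest `1 - η` fraction of `W` under `q`.

These two deletions of the laws of `W` lift to deletions of the laws of `(Z, X)`, whose marginals
are deletions of the laws of `Z` and `X`. By resilience both `Z`-marginals have mean within `ρ_Z(η)`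
of `E[Z]`, so comparing the means of `W = Z - X` bounds the difference of the means of the
`X`-marginals, which are `r_p` and `r_q`.

The Bochner integral of a non-integrable function is `0`, so resilience does not presuppose a finite
first moment, but it implies one (`MeanResilient1.integrable`): on sets of mass at least `1 / 2`
the integrals of `Z` are uniformly bounded, and on `(-k, n]` and `(-n, k]` they control those of
`|Z|`.
-/

open MeasureTheory Real

noncomputable section

/-- `r` is an `η`-deletion of `p`: `r ≤ p / (1 - η)`, i.e. `r(A) ≤ p(A)/(1-η)` for all
measurable `A`. -/
def IsDeletion {α : Type*} [MeasurableSpace α] (r p : Measure α) (η : ℝ) : Prop :=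
  ∀ A : Set α, MeasurableSet A → (r A).toReal ≤ (p A).toReal / (1 - η)

/-- Membership in the resilience family `𝒢_mean(ρ)` on `ℝ`:
for every `η ∈ [0,1)` and every `η`-deletion `r` of `p`, `|E_r[X] - E_p[X]| ≤ ρ(η)`. -/
def MeanResilient1 (ρ : ℝ → ℝ) (p : Measure ℝ) : Prop :=
  ∀ η ∈ Set.Ico (0 : ℝ) 1, ∀ r : Measure ℝ, IsProbabilityMeasure r → IsDeletion r p η →
    |(∫ x, x ∂r) - (∫ x, x ∂p)| ≤ ρ η

open Filter ProbabilityTheory Set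

section Deletion

variable {α β : Type*} [MeasurableSpace α] [MeasurableSpace β] {p r : Measure α} {η : ℝ}

lemma isDeletion_iff_le_smul [IsFiniteMeasure p] [IsFiniteMeasure r] (hη : η < 1) :
    IsDeletion r p η ↔ r ≤ ENNReal.ofReal (1 - η)⁻¹ • p := by
  have hc : 0 ≤ (1 - η)⁻¹ := inv_nonneg.2 (sub_nonneg.2 hη.le)
  rw [Measure.le_iff]
  refine forall₂_congr fun A _ => ?_
  rw [Measure.smul_apply, smul_eq_mul,
    ← ENNReal.toReal_le_toReal (measure_ne_top r A) (by finiteness), ENNReal.toReal_mul,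
    ENNReal.toReal_ofReal hc, inv_mul_eq_div]

lemma isDeletion_cond [IsFiniteMeasure p] {s : Set α} (hη : η < 1) (hs : 1 - η ≤ p.real s) :
    IsDeletion p[|s] p η := by
  intro A hA
  rw [cond_apply' hA, ENNReal.toReal_mul, ENNReal.toReal_inv, inv_mul_eq_div]
  exact div_le_div₀ measureReal_nonneg (measureReal_mono inter_subset_right)
    (sub_pos.2 hη) hs

lemma exists_le_map_eq [IsFiniteMeasure p] {f : α → β} (hf : Measurable f) {r : Measure β}
    (h : r ≤ p.map f) : ∃ p' ≤ p, p'.map f = r := by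
  have : IsFiniteMeasure r := isFiniteMeasure_of_le _ h
  set g := r.rnDeriv (p.map f)
  have hg : Measurable g := Measure.measurable_rnDeriv _ _
  refine ⟨p.withDensity (g ∘ f), ?_, ?_⟩
  · have hg1 : g ∘ f ≤ᵐ[p] 1 := ae_of_ae_map hf.aemeasurable (Measure.rnDeriv_le_one_of_le h)
    simpa using withDensity_mono hg1
  · ext A hA
    calc (p.withDensity (g ∘ f)).map f A = ∫⁻ ω in f ⁻¹' A, g (f ω) ∂p := by
          rw [Measure.map_apply hf hA, withDensity_apply _ (hf hA)]; rfl
      _ = (p.map f).withDensity g A := by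
          rw [withDensity_apply _ hA, setLIntegral_map hA hg hf]
      _ = r A := by
          rw [Measure.withDensity_rnDeriv_eq _ _ (Measure.absolutelyContinuous_of_le h)]

namespace IsDeletion

lemma integrable [IsFiniteMeasure p] [IsFiniteMeasure r] (h : IsDeletion r p η) (hη : η < 1)
    {f : α → ℝ} (hf : Integrable f p) : Integrable f r :=
  (hf.smul_measure ENNReal.ofReal_ne_top).mono_measure ((isDeletion_iff_le_smul hη).1 h)

lemma map [IsFiniteMeasure p] [IsFiniteMeasure r] (h : IsDeletion r p η) (hη : η < 1)
    {f : α → β} (hf : AEMeasurable f p) : IsDeletion (r.map f) (p.map f) η := by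
  rw [isDeletion_iff_le_smul hη, ← Measure.map_smul]
  exact Measure.map_mono_of_aemeasurable ((isDeletion_iff_le_smul hη).1 h) (hf.smul_measure _)

lemma exists_map_eq [IsFiniteMeasure p] {f : α → β} (hf : Measurable f)
    {r : Measure β} [IsProbabilityMeasure r] (hη : η < 1) (h : IsDeletion r (p.map f) η) :
    ∃ p' : Measure α, IsProbabilityMeasure p' ∧ IsDeletion p' p η ∧ p'.map f = r := by
  rw [isDeletion_iff_le_smul hη, ← Measure.map_smul] at h
  have : IsFiniteMeasure (ENNReal.ofReal (1 - η)⁻¹ • p) := p.smul_finite ENNReal.ofReal_ne_top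
  obtain ⟨p', hp', rfl⟩ := exists_le_map_eq hf h
  have : IsProbabilityMeasure p' := Measure.isProbabilityMeasure_of_map f
  exact ⟨p', this, (isDeletion_iff_le_smul hη).2 hp', rfl⟩

lemma fst {M : Measure (α × β)} {μ : Measure α} {ν : Measure β} [IsFiniteMeasure M]
    [IsFiniteMeasure μ] [IsProbabilityMeasure ν] (h : IsDeletion M (μ.prod ν) η) (hη : η < 1) :
    IsDeletion M.fst μ η := by
  simpa [Measure.fst] using h.map hη measurable_fst.aemeasurable

lemma snd {M : Measure (α × β)} {μ : Measure α} {ν : Measure β} [IsFiniteMeasure M]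
    [IsProbabilityMeasure μ] [IsFiniteMeasure ν] (h : IsDeletion M (μ.prod ν) η) (hη : η < 1) :
    IsDeletion M.snd ν η := by
  simpa [Measure.snd] using h.map hη measurable_snd.aemeasurable

end IsDeletion

end Deletion

section Quantile

variable {μ ν : Measure ℝ} {u : ℝ}

/-- The quantile function of a probability measure on `ℝ`, the generalized inverse of its cumulative
distribution function. It is meaningful on `(0, 1)` only: elsewhere the infimum may be that of an
empty or unbounded set, which is `0`. -/
def quantile (μ : Measure ℝ) (u : ℝ) : ℝ := sInf {t | u ≤ cdf μ t}

lemma quantile_le_iff (hu : u ∈ Ioo 0 1) {t : ℝ} : quantile μ u ≤ t ↔ u ≤ cdf μ t := by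
  have hne : {s | u ≤ cdf μ s}.Nonempty :=
    ((tendsto_cdf_atTop μ).eventually_const_le hu.2).exists
  obtain ⟨l, hl⟩ := ((tendsto_cdf_atBot μ).eventually_lt_const hu.1).exists
  have hbdd : BddBelow {s | u ≤ cdf μ s} :=
    ⟨l, fun s hs => ((monotone_cdf μ).reflect_lt (hl.trans_le hs)).le⟩
  refine ⟨fun h => ?_, fun h => csInf_le hbdd h⟩
  rw [← (cdf μ).iInf_Ioi_eq t]
  refine le_ciInf fun ⟨s, hs⟩ => ?_
  obtain ⟨s', hs', hlt⟩ := exists_lt_of_csInf_lt hne (h.trans_lt hs)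
  exact hs'.trans (monotone_cdf μ hlt.le)

lemma monotoneOn_quantile : MonotoneOn (quantile μ) (Ioo 0 1) := fun _ hu _ hv huv =>
  (quantile_le_iff hu).2 (huv.trans ((quantile_le_iff hv).1 le_rfl))

lemma aemeasurable_quantile : AEMeasurable (quantile μ) (volume.restrict (Ioo 0 1)) :=
  aemeasurable_restrict_of_monotoneOn measurableSet_Ioo monotoneOn_quantile

lemma map_quantile [IsProbabilityMeasure μ] :
    (volume.restrict (Ioo 0 1)).map (quantile μ) = μ := by
  have hfin : IsFiniteMeasure ((volume.restrict (Ioo 0 1)).map (quantile μ)) :=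
    Measure.isFiniteMeasure_map _ _
  refine Measure.ext_of_Iic _ _ fun t => ?_
  have hpre : quantile μ ⁻¹' Iic t ∩ Ioo 0 1 = Iic (cdf μ t) ∩ Ioo 0 1 := by
    ext u
    exact and_congr_left fun hu => quantile_le_iff hu
  calc (volume.restrict (Ioo 0 1)).map (quantile μ) (Iic t)
      = volume (Iic (cdf μ t) ∩ Ioo 0 1) := by
        rw [Measure.map_apply_of_aemeasurable aemeasurable_quantile measurableSet_Iic,
          Measure.restrict_apply' measurableSet_Ioo, hpre]
    _ = volume (Ioc 0 (cdf μ t)) := by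
        rw [measure_congr (EventuallyEq.rfl.inter Ioo_ae_eq_Ioc), inter_comm, Ioc_inter_Iic,
          min_eq_right (cdf_le_one μ t)]
    _ = μ (Iic t) := by rw [Real.volume_Ioc, sub_zero, ofReal_cdf]

lemma integrableOn_quantile [IsProbabilityMeasure μ] (hμ : Integrable (fun x => x) μ) :
    IntegrableOn (quantile μ) (Ioo 0 1) := by
  rw [← map_quantile (μ := μ)] at hμ
  exact hμ.comp_aemeasurable aemeasurable_quantile

lemma quantile_le_quantile_add {η : ℝ} (hcdf : ∀ t, cdf ν t ≤ cdf μ t + η) (hu : u ∈ Ioo 0 1)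
    (huη : u + η ∈ Ioo 0 1) : quantile μ u ≤ quantile ν (u + η) := by
  rw [quantile_le_iff hu]
  linarith [hcdf (quantile ν (u + η)), (quantile_le_iff (μ := ν) huη).1 le_rfl]

lemma exists_isDeletion_integral_eq_setIntegral_quantile [IsProbabilityMeasure μ] {s : Set ℝ}
    (hs : s ⊆ Ioo 0 1) {η : ℝ} (hη : η < 1) (hsη : volume.real s = 1 - η) :
    ∃ μ' : Measure ℝ, IsProbabilityMeasure μ' ∧ IsDeletion μ' μ η ∧
      ∫ x, x ∂μ' = (1 - η)⁻¹ * ∫ u in s, quantile μ u := by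
  set unif : Measure ℝ := volume.restrict (Ioo 0 1)
  have : IsProbabilityMeasure unif := ⟨by simp [unif]⟩
  have hrestrict : unif.restrict s = volume.restrict s := Measure.restrict_restrict_of_subset hs
  have hunif_s : unif.real s = 1 - η := by
    rw [← hsη, ← measureReal_restrict_apply_self, hrestrict, measureReal_restrict_apply_self]
  have hdel : IsDeletion unif[|s] unif η := isDeletion_cond hη hunif_s.ge
  have hprob : IsProbabilityMeasure unif[|s] := cond_isProbabilityMeasure fun h0 => by
    rw [measureReal_def, h0, ENNReal.toReal_zero] at hunif_s
    linarith
  have hq : AEMeasurable (quantile μ) unif[|s] :=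
    aemeasurable_quantile.mono_ac cond_absolutelyContinuous
  refine ⟨unif[|s].map (quantile μ), Measure.isProbabilityMeasure_map hq, ?_, ?_⟩
  · simpa only [unif, map_quantile] using hdel.map hη (aemeasurable_quantile (μ := μ))
  · rw [integral_map hq (by fun_prop), ProbabilityTheory.cond, integral_smul_measure,
      hrestrict, ENNReal.toReal_inv, ← measureReal_def, hunif_s, smul_eq_mul]

lemma exists_isDeletion_integral_le_of_cdf_le [IsProbabilityMeasure μ] [IsProbabilityMeasure ν]
    (hμ : Integrable (fun x => x) μ) (hν : Integrable (fun x => x) ν) {η : ℝ}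
    (hη : η ∈ Ico 0 1) (hcdf : ∀ t, cdf ν t ≤ cdf μ t + η) :
    ∃ μ' ν' : Measure ℝ, IsProbabilityMeasure μ' ∧ IsProbabilityMeasure ν' ∧
      IsDeletion μ' μ η ∧ IsDeletion ν' ν η ∧ ∫ x, x ∂μ' ≤ ∫ x, x ∂ν' := by
  obtain ⟨hη0, hη1⟩ := hη
  have hlow : Ioo 0 (1 - η) ⊆ Ioo 0 1 := Ioo_subset_Ioo_right (by linarith)
  have hhigh : Ioo η 1 ⊆ Ioo 0 1 := Ioo_subset_Ioo_left hη0
  obtain ⟨μ', hμ', hdelμ, hintμ⟩ :=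
    exists_isDeletion_integral_eq_setIntegral_quantile (μ := μ) hlow hη1 (by simp [hη1.le])
  obtain ⟨ν', hν', hdelν, hintν⟩ :=
    exists_isDeletion_integral_eq_setIntegral_quantile (μ := ν) hhigh hη1 (by simp [hη1.le])
  refine ⟨μ', ν', hμ', hν', hdelμ, hdelν, ?_⟩
  rw [hintμ, hintν]
  refine mul_le_mul_of_nonneg_left ?_ (inv_nonneg.2 (sub_nonneg.2 hη1.le))
  have hshift : MeasurePreserving (· + η) (volume.restrict (Ioo 0 (1 - η)))
      (volume.restrict (Ioo η 1)) := by
    simpa using (measurePreserving_add_right volume η).restrict_preimage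
      (measurableSet_Ioo (a := η) (b := 1))
  calc ∫ u in Ioo 0 (1 - η), quantile μ u
      ≤ ∫ u in Ioo 0 (1 - η), quantile ν (u + η) := by
        refine setIntegral_mono_on ((integrableOn_quantile hμ).mono_set hlow)
          (hshift.integrable_comp_of_integrable ((integrableOn_quantile hν).mono_set hhigh))
          measurableSet_Ioo fun u hu => ?_
        exact quantile_le_quantile_add hcdf (hlow hu) ⟨by linarith [hu.1], by linarith [hu.2]⟩
    _ = ∫ u in Ioo η 1, quantile ν u :=
        hshift.integral_comp (measurableEmbedding_addRight η) _

end Quantile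

lemma exists_isDeletion_integral_le_of_cdf_map_le {α β : Type*} [MeasurableSpace α]
    [MeasurableSpace β] {P : Measure α} {Q : Measure β} [IsProbabilityMeasure P]
    [IsProbabilityMeasure Q] {f : α → ℝ} {g : β → ℝ} (hf : Measurable f) (hg : Measurable g)
    (hfP : Integrable f P) (hgQ : Integrable g Q) {η : ℝ} (hη : η ∈ Ico 0 1)
    (hcdf : ∀ t, cdf (Q.map g) t ≤ cdf (P.map f) t + η) :
    ∃ (P' : Measure α) (Q' : Measure β), IsProbabilityMeasure P' ∧ IsProbabilityMeasure Q' ∧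
      IsDeletion P' P η ∧ IsDeletion Q' Q η ∧ ∫ x, f x ∂P' ≤ ∫ y, g y ∂Q' := by
  have := Measure.isProbabilityMeasure_map (μ := P) hf.aemeasurable
  have := Measure.isProbabilityMeasure_map (μ := Q) hg.aemeasurable
  obtain ⟨μ', ν', hμ', hν', hdelμ, hdelν, hle⟩ := exists_isDeletion_integral_le_of_cdf_le
    ((integrable_map_measure aestronglyMeasurable_id hf.aemeasurable).2 hfP)
    ((integrable_map_measure aestronglyMeasurable_id hg.aemeasurable).2 hgQ) hη hcdf
  obtain ⟨P', hP', hdelP, rfl⟩ := hdelμ.exists_map_eq hf hη.2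
  obtain ⟨Q', hQ', hdelQ, rfl⟩ := hdelν.exists_map_eq hg hη.2
  rw [integral_map hf.aemeasurable (by fun_prop),
    integral_map hg.aemeasurable (by fun_prop)] at hle
  exact ⟨P', Q', hP', hQ', hdelP, hdelQ, hle⟩

namespace MeanResilient1

variable {ρ : ℝ → ℝ} {μ : Measure ℝ} [IsProbabilityMeasure μ]

lemma abs_setIntegral_le (h : MeanResilient1 ρ μ) {η : ℝ} (hη : η ∈ Ico 0 1) {A : Set ℝ}
    (hA : 1 - η ≤ μ.real A) : |∫ x in A, x ∂μ| ≤ |∫ x, x ∂μ| + ρ η := by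
  have hpos : 0 < μ.real A := (sub_pos.2 hη.2).trans_le hA
  have hprob : IsProbabilityMeasure μ[|A] := cond_isProbabilityMeasure fun h0 => by
    simp [measureReal_def, h0] at hpos
  have hmean : ∫ x in A, x ∂μ = μ.real A * ∫ x, x ∂μ[|A] := by
    rw [ProbabilityTheory.cond, integral_smul_measure, ENNReal.toReal_inv, ← measureReal_def,
      smul_eq_mul, mul_inv_cancel_left₀ hpos.ne']
  calc |∫ x in A, x ∂μ| = μ.real A * |∫ x, x ∂μ[|A]| := by
        rw [hmean, abs_mul, abs_of_pos hpos]
    _ ≤ |∫ x, x ∂μ[|A]| := mul_le_of_le_one_left (abs_nonneg _) measureReal_le_one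
    _ ≤ |∫ x, x ∂μ| + |∫ x, x ∂μ[|A] - ∫ x, x ∂μ| := by
        linarith [abs_sub_abs_le_abs_sub (∫ x, x ∂μ[|A]) (∫ x, x ∂μ)]
    _ ≤ |∫ x, x ∂μ| + ρ η := by
        gcongr
        exact h η hη _ hprob (isDeletion_cond hη.2 hA)

lemma setIntegral_abs_le (h : MeanResilient1 ρ μ) {η : ℝ} (hη : η ∈ Ico 0 1) {A : Set ℝ}
    (hA : MeasurableSet A) (hμA : 1 - η ≤ μ.real A) (hi : IntegrableOn (fun x => x) A μ)
    {c K : ℝ} (hc : |c| ≤ 1) (hK : 0 ≤ K) (hcK : ∀ x ∈ A, |x| ≤ c * x + K) :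
    ∫ x in A, |x| ∂μ ≤ |∫ x, x ∂μ| + ρ η + K := by
  calc ∫ x in A, |x| ∂μ ≤ ∫ x in A, (c * x + K) ∂μ :=
        setIntegral_mono_on hi.abs ((hi.const_mul c).add (integrable_const _)) hA hcK
    _ = c * ∫ x in A, x ∂μ + μ.real A * K := by
        rw [integral_add (hi.const_mul c) (integrable_const _), integral_const_mul]
        simp
    _ ≤ |∫ x in A, x ∂μ| + K := by
        gcongr
        · calc c * ∫ x in A, x ∂μ ≤ |c| * |∫ x in A, x ∂μ| := by
                rw [← abs_mul]; exact le_abs_self _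
            _ ≤ |∫ x in A, x ∂μ| := mul_le_of_le_one_left (abs_nonneg _) hc
        · exact mul_le_of_le_one_left hK measureReal_le_one
    _ ≤ |∫ x, x ∂μ| + ρ η + K := by
        gcongr
        exact h.abs_setIntegral_le hη hμA

protected lemma integrable (h : MeanResilient1 ρ μ) : Integrable (fun x => x) μ := by
  have hhalf : (1 / 2 : ℝ) ∈ Ico 0 1 := by norm_num
  obtain ⟨K, -, hK, hμK⟩ := isOpen_univ.exists_lt_isCompact (μ := μ) (r := ENNReal.ofReal (1 / 2))
    (by simp)
  obtain ⟨k, hk0, hKk⟩ := hK.isBounded.subset_ball_lt 0 0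
  rw [Real.ball_eq_Ioo, zero_sub, zero_add] at hKk
  have hmass {A : Set ℝ} (hA : Ioo (-k) k ⊆ A) : 1 - 1 / 2 ≤ μ.real A := by
    calc (1 - 1 / 2 : ℝ) = 1 / 2 := by norm_num
      _ ≤ μ.real K := (ENNReal.ofReal_le_iff_le_toReal (measure_ne_top μ K)).1 hμK.le
      _ ≤ μ.real A := measureReal_mono (hKk.trans hA)
  have hint (u v : ℝ) : IntegrableOn (fun x => x) (Ioc u v) μ :=
    (continuous_id.continuousOn.integrableOn_compact isCompact_Icc).mono_set Ioc_subset_Icc_self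
  have hright : IntegrableOn (fun x => x) (Ioi (-k)) μ := by
    refine integrableOn_Ioi_of_intervalIntegral_norm_bounded
      (|∫ x, x ∂μ| + ρ (1 / 2) + 2 * k) (-k) (hint (-k)) tendsto_id ?_
    filter_upwards [eventually_ge_atTop k] with n hn
    rw [intervalIntegral.integral_of_le (by linarith)]
    refine h.setIntegral_abs_le hhalf (c := 1) (K := 2 * k) measurableSet_Ioc
      (hmass (Ioo_subset_Ioc_self.trans (Ioc_subset_Ioc_right hn))) (hint _ _) (by simp)
      (by linarith) fun x hx => abs_le.2 ⟨?_, ?_⟩ <;> linarith [hx.1]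
  have hleft : IntegrableOn (fun x => x) (Iic k) μ := by
    refine integrableOn_Iic_of_intervalIntegral_norm_bounded
      (|∫ x, x ∂μ| + ρ (1 / 2) + 2 * k) k (fun u => hint u k) tendsto_id ?_
    filter_upwards [eventually_le_atBot (-k)] with n hn
    rw [intervalIntegral.integral_of_le (by linarith)]
    refine h.setIntegral_abs_le hhalf (c := -1) (K := 2 * k) measurableSet_Ioc
      (hmass (Ioo_subset_Ioc_self.trans (Ioc_subset_Ioc_left hn))) (hint _ _) (by simp)
      (by linarith) fun x hx => abs_le.2 ⟨?_, ?_⟩ <;> linarith [hx.2]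
  have hcover : Iic k ∪ Ioi (-k) = univ := Iic_union_Ioi_of_le (by linarith)
  rw [← integrableOn_univ, ← hcover]
  exact hleft.union hright

lemma abs_integral_sub_add_integral_snd_sub_le (h : MeanResilient1 ρ μ) {ν : Measure ℝ}
    [IsProbabilityMeasure ν] (hν : Integrable (fun x => x) ν) {η : ℝ} (hη : η ∈ Ico 0 1)
    {M : Measure (ℝ × ℝ)} [IsProbabilityMeasure M] (hM : IsDeletion M (μ.prod ν) η) :
    |(∫ z, (z.1 - z.2) ∂M + ∫ x, x ∂M.snd) - ∫ x, x ∂μ| ≤ ρ η := by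
  have hfst : ∫ z, z.1 ∂M = ∫ x, x ∂M.fst :=
    (integral_map measurable_fst.aemeasurable aestronglyMeasurable_id).symm
  have hsnd : ∫ z, z.2 ∂M = ∫ x, x ∂M.snd :=
    (integral_map measurable_snd.aemeasurable aestronglyMeasurable_id).symm
  rw [integral_sub (hM.integrable hη.2 (h.integrable.comp_fst ν))
    (hM.integrable hη.2 (hν.comp_snd μ)), hfst, hsnd, sub_add_cancel]
  exact h η hη _ inferInstance (hM.fst hη.2)

end MeanResilient1

lemma cdf_map_sub_prod (μ p : Measure ℝ) [IsProbabilityMeasure μ] [IsProbabilityMeasure p]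
    (t : ℝ) :
    cdf ((μ.prod p).map fun z => z.1 - z.2) t = ∫ x, μ.real (Iic (x + t)) ∂p := by
  have hW : Measurable fun z : ℝ × ℝ => z.1 - z.2 := measurable_fst.sub measurable_snd
  have := Measure.isProbabilityMeasure_map (μ := μ.prod p) hW.aemeasurable
  have hmeas : Measurable fun x => μ (Iic (x + t)) :=
    Monotone.measurable fun x y hxy => measure_mono (Iic_subset_Iic.2 (by gcongr))
  have hsection (x : ℝ) : (·, x) ⁻¹' ((fun z : ℝ × ℝ => z.1 - z.2) ⁻¹' Iic t)
      = Iic (x + t) := by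
    ext z
    simp [add_comm]
  simp_rw [cdf_eq_real, measureReal_def, integral_toReal hmeas.aemeasurable
    (ae_of_all _ fun _ => measure_lt_top _ _), Measure.map_apply hW measurableSet_Iic,
    Measure.prod_apply_symm (hW measurableSet_Iic), hsection]

theorem mean_cross_of_smoothed_KS_close_general {μ p q : Measure ℝ} [IsProbabilityMeasure μ]
    [IsProbabilityMeasure p] [IsProbabilityMeasure q] {ρ : ℝ → ℝ} (hμ : MeanResilient1 ρ μ)
    (hp : Integrable (fun x => x) p) (hq : Integrable (fun x => x) q) {η : ℝ}
    (hη : η ∈ Ico 0 1)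
    (hclose : ∀ t, ∫ x, μ.real (Iic (x + t)) ∂q ≤ ∫ x, μ.real (Iic (x + t)) ∂p + η) :
    ∃ rp rq : Measure ℝ, IsProbabilityMeasure rp ∧ IsProbabilityMeasure rq ∧
      IsDeletion rp p η ∧ IsDeletion rq q η ∧
      Integrable (fun x => x) rp ∧ Integrable (fun x => x) rq ∧
      (∫ x, x ∂rq) - (∫ x, x ∂rp) ≤ 2 * ρ η := by
  have hW : Measurable fun z : ℝ × ℝ => z.1 - z.2 := measurable_fst.sub measurable_snd
  have hWint {ν : Measure ℝ} [IsProbabilityMeasure ν] (hν : Integrable (fun x => x) ν) :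
      Integrable (fun z => z.1 - z.2) (μ.prod ν) :=
    (hμ.integrable.comp_fst ν).sub (hν.comp_snd μ)
  obtain ⟨P, Q, hP, hQ, hdelP, hdelQ, hPQ⟩ := exists_isDeletion_integral_le_of_cdf_map_le hW hW
    (hWint hp) (hWint hq) hη (by simpa only [cdf_map_sub_prod] using hclose)
  have hrp := hdelP.snd hη.2
  have hrq := hdelQ.snd hη.2
  have hmeanP := abs_le.1 (hμ.abs_integral_sub_add_integral_snd_sub_le hp hη hdelP)
  have hmeanQ := abs_le.1 (hμ.abs_integral_sub_add_integral_snd_sub_le hq hη hdelQ)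
  exact ⟨P.snd, Q.snd, inferInstance, inferInstance, hrp, hrq, hrp.integrable hη.2 hp,
    hrq.integrable hη.2 hq, by linarith⟩

lemma integral_measureReal_Iic_add_of_affine {T : ℝ → ℝ} {a b : ℝ} {μ ν : Measure ℝ}
    [IsProbabilityMeasure ν] (hCDF : ∀ x, a * T x + b = (μ (Iic x)).toReal) {t : ℝ}
    (hT : Integrable (fun x => T (x + t)) ν) :
    ∫ x, μ.real (Iic (x + t)) ∂ν = a * ∫ x, T (x + t) ∂ν + b := by
  simp_rw [measureReal_def, ← hCDF]
  rw [integral_add (hT.const_mul a) (integrable_const b), integral_const_mul]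
  simp

lemma integral_measureReal_Iic_add_le_of_affine {T : ℝ → ℝ} {a b : ℝ} {μ p q : Measure ℝ}
    [IsProbabilityMeasure p] [IsProbabilityMeasure q]
    (hCDF : ∀ x, a * T x + b = (μ (Iic x)).toReal) {t ε : ℝ}
    (hTp : Integrable (fun x => T (x + t)) p) (hTq : Integrable (fun x => T (x + t)) q)
    (hε : |∫ x, T (x + t) ∂p - ∫ x, T (x + t) ∂q| ≤ ε) :
    ∫ x, μ.real (Iic (x + t)) ∂q ≤ ∫ x, μ.real (Iic (x + t)) ∂p + |a| * ε := by
  rw [integral_measureReal_Iic_add_of_affine hCDF hTp,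
    integral_measureReal_Iic_add_of_affine hCDF hTq, ← sub_le_iff_le_add',
    add_sub_add_right_eq_sub, ← mul_sub]
  calc a * (∫ x, T (x + t) ∂q - ∫ x, T (x + t) ∂p)
      ≤ |a| * |∫ x, T (x + t) ∂p - ∫ x, T (x + t) ∂q| := by
        rw [abs_sub_comm, ← abs_mul]
        exact le_abs_self _
    _ ≤ |a| * ε := by gcongr

/-- **Closeness in smoothed KS distance implies mean cross** (Lemma 1).
If `a·T(x) + b` is the CDF of a random variable `Z` whose law lies in `𝒢_mean(ρ_Z)`, and
`sup_t |E_p[T(X+t)] - E_q[T(X+t)]| ≤ ε` with `|a|ε < 1`, then there are deletions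
`r_p ≤ p/(1-|a|ε)` and `r_q ≤ q/(1-|a|ε)` with `E_{r_q}[X] - E_{r_p}[X] ≤ 2 ρ_Z(|a|ε)`. -/
theorem mean_cross_of_smoothed_KS_close
    (T : ℝ → ℝ) (a b : ℝ) (μZ : Measure ℝ) [IsProbabilityMeasure μZ]
    (hCDF : ∀ x : ℝ, a * T x + b = (μZ (Set.Iic x)).toReal)
    (ρZ : ℝ → ℝ) (hres : MeanResilient1 ρZ μZ)
    (p q : Measure ℝ) [IsProbabilityMeasure p] [IsProbabilityMeasure q]
    (hp : Integrable (fun x : ℝ => x) p) (hq : Integrable (fun x : ℝ => x) q)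
    (hTp : ∀ t : ℝ, Integrable (fun x => T (x + t)) p)
    (hTq : ∀ t : ℝ, Integrable (fun x => T (x + t)) q)
    (ε : ℝ) (hε : 0 ≤ ε) (hae : |a| * ε < 1)
    (hKS : ∀ t : ℝ, |(∫ x, T (x + t) ∂p) - (∫ x, T (x + t) ∂q)| ≤ ε) :
    ∃ (rp rq : Measure ℝ), IsProbabilityMeasure rp ∧ IsProbabilityMeasure rq ∧
      IsDeletion rp p (|a| * ε) ∧ IsDeletion rq q (|a| * ε) ∧
      Integrable (fun x : ℝ => x) rp ∧ Integrable (fun x : ℝ => x) rq ∧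
      (∫ x, x ∂rq) - (∫ x, x ∂rp) ≤ 2 * ρZ (|a| * ε) := by
  exact mean_cross_of_smoothed_KS_close_general hres hp hq
    ⟨mul_nonneg (abs_nonneg a) hε, hae⟩ fun t =>
      integral_measureReal_Iic_add_le_of_affine hCDF (hTp t) (hTq t) (hKS t)
end
end

section
/- Let 𝒢 be a set of probability distributions on ℝ^d containing p★, let p be a distribution with TV(p★, p) ≤ ε, and let p̂_n be any distribution. Let 𝒟 be a family of pairs (d₁, d₂) of measurable functions with |d₂(x)| ≤ 1/2 for all (d₁, d₂) ∈ 𝒟 and all x, and define A(p, q) = sup_{(d₁,d₂)∈𝒟} (E_p[d₁(X)] + E_q[d₂(X)]) and Ā(p, q) = sup_{(d₁,d₂)∈𝒟} |E_p[d₂(X)] − E_q[d₂(X)]|. If q ∈ 𝒢 attains the minimum of A(q', p̂_n) over q' ∈ 𝒢, then A(q, p★) − A(p★, p★) ≤ 2ε + 2Ā(p, p̂_n). -/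
/-!
Let `IPM μ ν = sup |E_μ[d₂] - E_ν[d₂]|`, so that `Ā(p, p̂_n) = IPM p p̂_n`. Replacing the second
argument of `A` by another distribution changes `A` by at most the `IPM` between the two, and `IPM`
satisfies the triangle inequality. With `δ = IPM p★ p̂_n ≤ IPM p★ p + Ā(p, p̂_n)`, minimality of `q`
gives `A(q, p★) ≤ A(q, p̂_n) + δ ≤ A(p★, p̂_n) + δ ≤ A(p★, p★) + 2δ`. Finally `IPM p★ p ≤ ε`: by the
layer-cake formula the mean of a function with values in `[a, b]` is `a` plus an integral over
`t ∈ [a, b]` of probabilities of superlevel sets, each of which changes by at most `ε`; for `d₂` the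
interval `[-1/2, 1/2]` has length one.
-/

open MeasureTheory Real

noncomputable section

variable {d : ℕ}

/-- The set of discriminator values `E_p[d₁] + E_q[d₂]` for `(d₁,d₂) ∈ 𝒟`. -/
def ASet (D : Set ((EuclideanSpace ℝ (Fin d) → ℝ) × (EuclideanSpace ℝ (Fin d) → ℝ)))
    (p q : Measure (EuclideanSpace ℝ (Fin d))) : Set ℝ :=
  {s | ∃ dd ∈ D, s = (∫ x, dd.1 x ∂p) + (∫ x, dd.2 x ∂q)}

/-- `A(p,q) = sup_{(d₁,d₂)∈𝒟} (E_p[d₁(X)] + E_q[d₂(X)])`. -/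
def Afun (D : Set ((EuclideanSpace ℝ (Fin d) → ℝ) × (EuclideanSpace ℝ (Fin d) → ℝ)))
    (p q : Measure (EuclideanSpace ℝ (Fin d))) : ℝ := sSup (ASet D p q)

/-- `Ā(p,q) = sup_{(d₁,d₂)∈𝒟} |E_p[d₂(X)] - E_q[d₂(X)]|`. -/
def Abar (D : Set ((EuclideanSpace ℝ (Fin d) → ℝ) × (EuclideanSpace ℝ (Fin d) → ℝ)))
    (p q : Measure (EuclideanSpace ℝ (Fin d))) : ℝ :=
  sSup {s | ∃ dd ∈ D, s = |(∫ x, dd.2 x ∂p) - (∫ x, dd.2 x ∂q)|}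

section TotalVariation

variable {Ω : Type*} [MeasurableSpace Ω] {μ ν : Measure Ω} {f : Ω → ℝ} {a b ε : ℝ}

lemma antitone_measureReal_superlevel (μ : Measure Ω) [IsFiniteMeasure μ] (f : Ω → ℝ) :
    Antitone fun t ↦ μ.real {x | t ≤ f x} :=
  fun _ _ hst ↦ measureReal_mono fun _ hx ↦ hst.trans hx

lemma integral_eq_add_intervalIntegral_measureReal_le [IsFiniteMeasure μ] (hab : a ≤ b)
    (hf : AEMeasurable f μ) (hfab : ∀ᵐ x ∂μ, f x ∈ Set.Icc a b) :
    ∫ x, f x ∂μ = μ.real Set.univ * a + ∫ t in a..b, μ.real {x | t ≤ f x} := by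
  have hfint : Integrable f μ := .of_mem_Icc a b hf hfab
  have hlayer : ∫ x, (f x - a) ∂μ = ∫ t in Set.Ioc 0 (b - a), μ.real {x | t ≤ f x - a} :=
    (hfint.sub (integrable_const a)).integral_eq_integral_Ioc_meas_le
      (hfab.mono fun _ hx ↦ sub_nonneg.2 hx.1) (hfab.mono fun _ hx ↦ sub_le_sub_right hx.2 a)
  have hshift : ∫ t in Set.Ioc 0 (b - a), μ.real {x | t ≤ f x - a} =
      ∫ t in a..b, μ.real {x | t ≤ f x} := by
    simp only [le_sub_iff_add_le]
    rw [← intervalIntegral.integral_of_le (sub_nonneg.2 hab),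
      intervalIntegral.integral_comp_add_right (fun t ↦ μ.real {x | t ≤ f x}) a,
      zero_add, sub_add_cancel]
  rw [← hshift, ← hlayer, integral_sub hfint (integrable_const a), integral_const, smul_eq_mul,
    add_sub_cancel]

lemma abs_measureReal_sub_le_of_nullMeasurableSet {A : Set Ω}
    (hTV : ∀ B, MeasurableSet B → |μ.real B - ν.real B| ≤ ε) (hA : NullMeasurableSet A (μ + ν)) :
    |μ.real A - ν.real A| ≤ ε := by
  obtain ⟨hμ, hν⟩ := ae_add_measure_iff.1 hA.toMeasurable_ae_eq
  rw [← measureReal_congr hμ, ← measureReal_congr hν]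
  exact hTV _ (measurableSet_toMeasurable _ _)

lemma abs_integral_sub_integral_le_of_mem_Icc [IsProbabilityMeasure μ] [IsProbabilityMeasure ν]
    (hTV : ∀ A, MeasurableSet A → |μ.real A - ν.real A| ≤ ε)
    (hfμ : AEMeasurable f μ) (hfν : AEMeasurable f ν)
    (hμab : ∀ᵐ x ∂μ, f x ∈ Set.Icc a b) (hνab : ∀ᵐ x ∂ν, f x ∈ Set.Icc a b) :
    |∫ x, f x ∂μ - ∫ x, f x ∂ν| ≤ (b - a) * ε := by
  have hab : a ≤ b := let ⟨_, hx⟩ := hμab.exists; hx.1.trans hx.2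
  have hsuper (t : ℝ) : |μ.real {x | t ≤ f x} - ν.real {x | t ≤ f x}| ≤ ε :=
    abs_measureReal_sub_le_of_nullMeasurableSet hTV
      (nullMeasurableSet_le aemeasurable_const (hfμ.add_measure hfν))
  calc |∫ x, f x ∂μ - ∫ x, f x ∂ν|
      = |∫ t in a..b, (μ.real {x | t ≤ f x} - ν.real {x | t ≤ f x})| := by
        rw [integral_eq_add_intervalIntegral_measureReal_le hab hfμ hμab,
          integral_eq_add_intervalIntegral_measureReal_le hab hfν hνab,
          intervalIntegral.integral_sub (antitone_measureReal_superlevel μ f).intervalIntegrable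
            (antitone_measureReal_superlevel ν f).intervalIntegrable,
          probReal_univ, probReal_univ, add_sub_add_left_eq_sub]
    _ ≤ ε * |b - a| := by
        rw [← Real.norm_eq_abs]
        exact intervalIntegral.norm_integral_le_of_norm_le_const fun t _ ↦ hsuper t
    _ = (b - a) * ε := by rw [abs_of_nonneg (sub_nonneg.2 hab), mul_comm]

end TotalVariation

section IntegralProbabilityMetric

variable {Ω ι : Type*} [MeasurableSpace Ω] {μ ν ρ : Measure Ω} {f : ι → Ω → ℝ} {a b ε : ℝ}

/-- The integral probability metric of a family `f` of test functions. It is the junk value `0` if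
the differences of the means are unbounded. -/
def integralProbMetric (f : ι → Ω → ℝ) (μ ν : Measure Ω) : ℝ :=
  ⨆ i, |∫ x, f i x ∂μ - ∫ x, f i x ∂ν|

lemma integralProbMetric_comm (f : ι → Ω → ℝ) (μ ν : Measure Ω) :
    integralProbMetric f μ ν = integralProbMetric f ν μ := by
  simp only [integralProbMetric, abs_sub_comm]

lemma integralProbMetric_nonneg (f : ι → Ω → ℝ) (μ ν : Measure Ω) :
    0 ≤ integralProbMetric f μ ν :=
  Real.iSup_nonneg fun _ ↦ abs_nonneg _

lemma integralProbMetric_triangle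
    (hμν : BddAbove (Set.range fun i ↦ |∫ x, f i x ∂μ - ∫ x, f i x ∂ν|))
    (hνρ : BddAbove (Set.range fun i ↦ |∫ x, f i x ∂ν - ∫ x, f i x ∂ρ|)) :
    integralProbMetric f μ ρ ≤ integralProbMetric f μ ν + integralProbMetric f ν ρ :=
  Real.iSup_le
    (fun i ↦ (abs_sub_le _ _ _).trans (add_le_add (le_ciSup hμν i) (le_ciSup hνρ i)))
    (add_nonneg (integralProbMetric_nonneg f μ ν) (integralProbMetric_nonneg f ν ρ))

lemma integralProbMetric_le_of_mem_Icc [Nonempty ι] [IsProbabilityMeasure μ]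
    [IsProbabilityMeasure ν] (hTV : ∀ A, MeasurableSet A → |μ.real A - ν.real A| ≤ ε)
    (hfμ : ∀ i, AEMeasurable (f i) μ) (hfν : ∀ i, AEMeasurable (f i) ν)
    (hf : ∀ i x, f i x ∈ Set.Icc a b) :
    integralProbMetric f μ ν ≤ (b - a) * ε :=
  ciSup_le fun i ↦ abs_integral_sub_integral_le_of_mem_Icc hTV (hfμ i) (hfν i)
    (.of_forall (hf i)) (.of_forall (hf i))

lemma bddAbove_range_abs_integral_sub_of_mem_Icc [IsProbabilityMeasure μ]
    [IsProbabilityMeasure ν] (hfμ : ∀ i, AEMeasurable (f i) μ) (hfν : ∀ i, AEMeasurable (f i) ν)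
    (hf : ∀ i x, f i x ∈ Set.Icc a b) :
    BddAbove (Set.range fun i ↦ |∫ x, f i x ∂μ - ∫ x, f i x ∂ν|) := by
  have hTV (A : Set Ω) (_ : MeasurableSet A) : |μ.real A - ν.real A| ≤ 1 :=
    abs_sub_le_of_nonneg_of_le measureReal_nonneg measureReal_le_one measureReal_nonneg
      measureReal_le_one
  exact ⟨(b - a) * 1, Set.forall_mem_range.2 fun i ↦
    abs_integral_sub_integral_le_of_mem_Icc hTV (hfμ i) (hfν i)
      (.of_forall (hf i)) (.of_forall (hf i))⟩

end IntegralProbabilityMetric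

section AdversarialLoss

variable {Ω ι : Type*} [MeasurableSpace Ω]

/-- The adversarial loss `A(μ, ν)` of a discriminator family. Only its second argument is ever
varied, so `E_μ[d₁]` is replaced by an arbitrary functional `φ i` of `μ`. It is the junk value `0`
if the values of the discriminators are unbounded above. -/
def adversarialLoss (φ : ι → Measure Ω → ℝ) (f : ι → Ω → ℝ) (μ ν : Measure Ω) : ℝ :=
  ⨆ i, (φ i μ + ∫ x, f i x ∂ν)

variable [Nonempty ι] {φ : ι → Measure Ω → ℝ} {f : ι → Ω → ℝ} {a b ε : ℝ}

lemma adversarialLoss_le_add_integralProbMetric {μ ν ν' : Measure Ω}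
    (hA : BddAbove (Set.range fun i ↦ φ i μ + ∫ x, f i x ∂ν'))
    (hνν' : BddAbove (Set.range fun i ↦ |∫ x, f i x ∂ν - ∫ x, f i x ∂ν'|)) :
    adversarialLoss φ f μ ν ≤ adversarialLoss φ f μ ν' + integralProbMetric f ν ν' := by
  refine ciSup_le fun i ↦ ?_
  calc φ i μ + ∫ x, f i x ∂ν
      = φ i μ + ∫ x, f i x ∂ν' + (∫ x, f i x ∂ν - ∫ x, f i x ∂ν') := by ring
    _ ≤ adversarialLoss φ f μ ν' + integralProbMetric f ν ν' :=
        add_le_add (le_ciSup hA i) ((le_abs_self _).trans (le_ciSup hνν' i))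

lemma adversarialLoss_sub_le_two_mul_integralProbMetric {q pstar phat : Measure Ω}
    (hq : BddAbove (Set.range fun i ↦ φ i q + ∫ x, f i x ∂phat))
    (hpstar : BddAbove (Set.range fun i ↦ φ i pstar + ∫ x, f i x ∂pstar))
    (hdist : BddAbove (Set.range fun i ↦ |∫ x, f i x ∂pstar - ∫ x, f i x ∂phat|))
    (hmin : adversarialLoss φ f q phat ≤ adversarialLoss φ f pstar phat) :
    adversarialLoss φ f q pstar - adversarialLoss φ f pstar pstar ≤
      2 * integralProbMetric f pstar phat := by
  have hq_swap := adversarialLoss_le_add_integralProbMetric hq hdist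
  have hpstar_swap := adversarialLoss_le_add_integralProbMetric hpstar
    (by simpa only [abs_sub_comm] using hdist)
  rw [integralProbMetric_comm] at hpstar_swap
  linarith

theorem projection_excess_bound_general {q pstar p phat : Measure Ω}
    [IsProbabilityMeasure pstar] [IsProbabilityMeasure p] [IsProbabilityMeasure phat]
    (hTV : ∀ A, MeasurableSet A → |pstar.real A - p.real A| ≤ ε)
    (hf : ∀ i x, f i x ∈ Set.Icc a b)
    (hmeas : ∀ i (μ : Measure Ω), IsProbabilityMeasure μ → AEMeasurable (f i) μ)
    (hq : BddAbove (Set.range fun i ↦ φ i q + ∫ x, f i x ∂phat))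
    (hpstar : BddAbove (Set.range fun i ↦ φ i pstar + ∫ x, f i x ∂pstar))
    (hmin : adversarialLoss φ f q phat ≤ adversarialLoss φ f pstar phat) :
    adversarialLoss φ f q pstar - adversarialLoss φ f pstar pstar ≤
      2 * ((b - a) * ε) + 2 * integralProbMetric f p phat := by
  have hbdd (μ ν : Measure Ω) [IsProbabilityMeasure μ] [IsProbabilityMeasure ν] :
      BddAbove (Set.range fun i ↦ |∫ x, f i x ∂μ - ∫ x, f i x ∂ν|) :=
    bddAbove_range_abs_integral_sub_of_mem_Icc (fun i ↦ hmeas i μ inferInstance)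
      (fun i ↦ hmeas i ν inferInstance) hf
  calc adversarialLoss φ f q pstar - adversarialLoss φ f pstar pstar
      ≤ 2 * integralProbMetric f pstar phat :=
        adversarialLoss_sub_le_two_mul_integralProbMetric hq hpstar (hbdd pstar phat) hmin
    _ ≤ 2 * (integralProbMetric f pstar p + integralProbMetric f p phat) := by
        gcongr
        exact integralProbMetric_triangle (hbdd pstar p) (hbdd p phat)
    _ ≤ 2 * ((b - a) * ε + integralProbMetric f p phat) := by
        gcongr
        exact integralProbMetric_le_of_mem_Icc hTV (fun i ↦ hmeas i pstar inferInstance)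
          (fun i ↦ hmeas i p inferInstance) hf
    _ = 2 * ((b - a) * ε) + 2 * integralProbMetric f p phat := mul_add _ _ _

end AdversarialLoss

lemma ASet_eq_range (D : Set ((EuclideanSpace ℝ (Fin d) → ℝ) × (EuclideanSpace ℝ (Fin d) → ℝ)))
    (p q : Measure (EuclideanSpace ℝ (Fin d))) :
    ASet D p q = Set.range fun dd : D ↦ ∫ x, dd.1.1 x ∂p + ∫ x, dd.1.2 x ∂q := by
  ext s
  simp only [ASet, Set.mem_ofPred_eq, Set.mem_range, Subtype.exists, exists_prop, eq_comm]

lemma Afun_eq_adversarialLoss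
    (D : Set ((EuclideanSpace ℝ (Fin d) → ℝ) × (EuclideanSpace ℝ (Fin d) → ℝ)))
    (p q : Measure (EuclideanSpace ℝ (Fin d))) :
    Afun D p q =
      adversarialLoss (fun (dd : D) μ ↦ ∫ x, dd.1.1 x ∂μ) (fun dd : D ↦ dd.1.2) p q := by
  rw [Afun, ASet_eq_range, adversarialLoss, iSup]

lemma Abar_eq_integralProbMetric
    (D : Set ((EuclideanSpace ℝ (Fin d) → ℝ) × (EuclideanSpace ℝ (Fin d) → ℝ)))
    (p q : Measure (EuclideanSpace ℝ (Fin d))) :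
    Abar D p q = integralProbMetric (fun dd : D ↦ dd.1.2) p q := by
  rw [Abar, integralProbMetric, iSup]
  congr 1
  ext s
  simp only [Set.mem_ofPred_eq, Set.mem_range, Subtype.exists, exists_prop, eq_comm]

/-- If `q` minimizes `A(·, p̂_n)` over `𝒢 ∋ p★` and `TV(p★, p) ≤ ε`, then
`A(q, p★) - A(p★, p★) ≤ 2ε + 2Ā(p, p̂_n)`. -/
theorem projection_excess_bound
    (G : Set (Measure (EuclideanSpace ℝ (Fin d))))
    (pstar p phat : Measure (EuclideanSpace ℝ (Fin d)))
    [IsProbabilityMeasure pstar] [IsProbabilityMeasure p] [IsProbabilityMeasure phat]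
    (hpstar : pstar ∈ G)
    (ε : ℝ)
    (hTV : ∀ A : Set (EuclideanSpace ℝ (Fin d)), MeasurableSet A →
      |(pstar A).toReal - (p A).toReal| ≤ ε)
    (D : Set ((EuclideanSpace ℝ (Fin d) → ℝ) × (EuclideanSpace ℝ (Fin d) → ℝ)))
    (hD : D.Nonempty)
    (hd2 : ∀ dd ∈ D, ∀ x, |dd.2 x| ≤ 1 / 2)
    (hInt : ∀ dd ∈ D, ∀ μ : Measure (EuclideanSpace ℝ (Fin d)), IsProbabilityMeasure μ →
      Integrable dd.1 μ ∧ Integrable dd.2 μ)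
    (hBdd : ∀ μ ν : Measure (EuclideanSpace ℝ (Fin d)), IsProbabilityMeasure μ →
      IsProbabilityMeasure ν → BddAbove (ASet D μ ν))
    (q : Measure (EuclideanSpace ℝ (Fin d))) [IsProbabilityMeasure q]
    (hq : q ∈ G)
    (hmin : ∀ q' ∈ G, Afun D q phat ≤ Afun D q' phat) :
    Afun D q pstar - Afun D pstar pstar ≤ 2 * ε + 2 * Abar D p phat := by
  have := hD.to_subtype
  simp only [Afun_eq_adversarialLoss, Abar_eq_integralProbMetric, ASet_eq_range] at hBdd hmin ⊢
  linarith [projection_excess_bound_general hTV (fun (dd : D) x ↦ abs_le.1 (hd2 dd dd.2 x))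
    (fun dd μ hμ ↦ (hInt dd dd.2 μ hμ).2.aestronglyMeasurable.aemeasurable)
    (hBdd q phat inferInstance inferInstance) (hBdd pstar pstar inferInstance inferInstance)
    (hmin pstar hpstar)]
end
end

section
/- Let T : ℝ → ℝ and a, b ∈ ℝ be such that x ↦ a·T(x) + b is the cumulative distribution function of a real random variable Z. Let p and q be probability distributions on ℝ and suppose sup_{t∈ℝ} |E_{X∼p}[T(X+t)] − E_{X∼q}[T(X+t)]| ≤ ε. Let Z be independent of X under both p and q. Then sup_{t∈ℝ} |P_{X∼p}(X − Z ≥ t) − P_{X∼q}(X − Z ≥ t)| ≤ |a|·ε, where X − Z denotes the difference of the independent variables X and Z. -/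
/-!
Conditionally on `X = x`, the event `X - Z ≥ t` is `Z ≤ x - t`, whose probability is the CDF value
`a * T (x - t) + b`. Integrating over `X` gives `P(X - Z ≥ t) = a * E[T (X - t)] + b`. The constant
`b` cancels in the difference of two laws of `X`, so replacing `p` by `q` scales the discrepancy of
the smoothed expectations at the shift `-t` by exactly `|a|`.
-/

open MeasureTheory Real

noncomputable section

section OrderedGroup

variable {G : Type*} [AddCommGroup G] [Preorder G]

lemma prodMk_preimage_sub_preimage_Ici [AddLeftMono G] (x t : G) :
    Prod.mk x ⁻¹' ((fun w : G × G => w.1 - w.2) ⁻¹' Set.Ici t) = Set.Iic (x - t) :=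
  Set.ext fun _ => le_sub_comm

variable [TopologicalSpace G] [ClosedIciTopology G]
  [MeasurableSpace G] [OpensMeasurableSpace G] [MeasurableSub₂ G]

lemma measurableSet_sub_preimage_Ici (t : G) :
    MeasurableSet ((fun w : G × G => w.1 - w.2) ⁻¹' Set.Ici t) :=
  measurable_sub measurableSet_Ici

variable [AddLeftMono G]

lemma integrable_measureReal_Iic_sub (p μ : Measure G) [IsFiniteMeasure p] [IsFiniteMeasure μ]
    (t : G) : Integrable (fun x => μ.real (Set.Iic (x - t))) p := by
  simpa only [prodMk_preimage_sub_preimage_Ici] using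
    Measure.integrable_measure_prodMk_left (μ := p) (ν := μ)
      (measurableSet_sub_preimage_Ici t) (measure_ne_top _ _)

lemma measureReal_map_sub_prod_Ici (p μ : Measure G) [IsFiniteMeasure μ] (t : G) :
    ((p.prod μ).map fun w => w.1 - w.2).real (Set.Ici t) = ∫ x, μ.real (Set.Iic (x - t)) ∂p := by
  have hs := measurableSet_sub_preimage_Ici t
  rw [map_measureReal_apply measurable_sub measurableSet_Ici, measureReal_def,
    Measure.prod_apply hs, ← integral_toReal (measurable_measure_prodMk_left hs).aemeasurable
      (.of_forall fun _ => measure_lt_top _ _)]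
  simp only [prodMk_preimage_sub_preimage_Ici, measureReal_def]

lemma measureReal_map_sub_prod_Ici_of_affine_cdf {T : G → ℝ} {a b : ℝ} {μ : Measure G}
    [IsFiniteMeasure μ] (hCDF : ∀ x, a * T x + b = μ.real (Set.Iic x))
    (p : Measure G) [IsFiniteMeasure p] (t : G) :
    ((p.prod μ).map fun w => w.1 - w.2).real (Set.Ici t) =
      a * (∫ x, T (x - t) ∂p) + p.real Set.univ * b := by
  have hT : ∀ x, μ.real (Set.Iic (x - t)) - b = a * T (x - t) := fun x => by
    rw [← hCDF, add_sub_cancel_right]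
  calc
    ((p.prod μ).map fun w => w.1 - w.2).real (Set.Ici t)
      = ∫ x, μ.real (Set.Iic (x - t)) ∂p := measureReal_map_sub_prod_Ici p μ t
    _ = (∫ x, (μ.real (Set.Iic (x - t)) - b) ∂p) + p.real Set.univ * b := by
        rw [integral_sub (integrable_measureReal_Iic_sub p μ t) (integrable_const b),
          integral_const, smul_eq_mul, sub_add_cancel]
    _ = a * (∫ x, T (x - t) ∂p) + p.real Set.univ * b := by
        simp only [hT, integral_const_mul]

theorem smoothed_KS_to_KS_of_difference_general {T : G → ℝ} {a b : ℝ} {μ : Measure G}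
    [IsFiniteMeasure μ] (hCDF : ∀ x, a * T x + b = μ.real (Set.Iic x))
    {p q : Measure G} [IsProbabilityMeasure p] [IsProbabilityMeasure q] {ε : ℝ} {t : G}
    (hKS : |(∫ x, T (x - t) ∂p) - (∫ x, T (x - t) ∂q)| ≤ ε) :
    |((p.prod μ).map fun w => w.1 - w.2).real (Set.Ici t) -
      ((q.prod μ).map fun w => w.1 - w.2).real (Set.Ici t)| ≤ |a| * ε := by
  simp only [measureReal_map_sub_prod_Ici_of_affine_cdf hCDF, probReal_univ]
  rw [add_sub_add_right_eq_sub, ← mul_sub, abs_mul]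
  gcongr

end OrderedGroup

/-- If `a·T(x)+b` is the CDF of `Z`, and `sup_t |E_p[T(X+t)] - E_q[T(X+t)]| ≤ ε`, then the laws
of `X - Z` (with `X ∼ p`, resp. `X ∼ q`, independent of `Z`) satisfy
`sup_t |P_p(X - Z ≥ t) - P_q(X - Z ≥ t)| ≤ |a| ε`.  The law of `X - Z` is the pushforward of
the independent product measure under `(x, z) ↦ x - z`. -/
theorem smoothed_KS_to_KS_of_difference
    (T : ℝ → ℝ) (a b : ℝ) (μZ : Measure ℝ) [IsProbabilityMeasure μZ]
    (hCDF : ∀ x : ℝ, a * T x + b = (μZ (Set.Iic x)).toReal)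
    (p q : Measure ℝ) [IsProbabilityMeasure p] [IsProbabilityMeasure q]
    (hTp : ∀ t : ℝ, Integrable (fun x => T (x + t)) p)
    (hTq : ∀ t : ℝ, Integrable (fun x => T (x + t)) q)
    (ε : ℝ)
    (hKS : ∀ t : ℝ, |(∫ x, T (x + t) ∂p) - (∫ x, T (x + t) ∂q)| ≤ ε) :
    ∀ t : ℝ,
      |((Measure.map (fun w : ℝ × ℝ => w.1 - w.2) (p.prod μZ)) (Set.Ici t)).toReal -
        ((Measure.map (fun w : ℝ × ℝ => w.1 - w.2) (q.prod μZ)) (Set.Ici t)).toReal|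
        ≤ |a| * ε :=
  fun t => smoothed_KS_to_KS_of_difference_general hCDF
    (by simpa only [sub_eq_add_neg] using hKS (-t))
end
end

section
/- Let p̃ and q̃ be probability distributions on ℝ with finite first moments such that sup_{t∈ℝ} |P_{Y∼p̃}(Y ≥ t) − P_{Y∼q̃}(Y ≥ t)| ≤ ε for some ε ∈ [0,1). Then there exist probability distributions r̃_p ≤ p̃/(1−ε) and r̃_q ≤ q̃/(1−ε) such that r̃_q stochastically dominates r̃_p (i.e., P_{r̃_p}(Y ≥ t) ≤ P_{r̃_q}(Y ≥ t) for all t ∈ ℝ), and consequently E_{r̃_p}[Y] ≤ E_{r̃_q}[Y]. The distributions r̃_p and r̃_q can be obtained by deleting probability mass ε from the largest points of p̃ and from the smallest points of q̃, respectively. -/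
open MeasureTheory Real

noncomputable section

/-!
Let `G` denote the upper tail `t ↦ μ [t, ∞)` of a probability measure `μ`, and let `Q` be the
quantile function read from the top, so that `t ≤ Q u ↔ u ≤ G t` for `0 < u < 1`. Small levels `u`
correspond to large points, so for `U` uniform on `(ε, 1)` the law of `Q U` is `μ` with mass `ε`
deleted from its largest points, and for `U` uniform on `(0, 1 - ε)` it is `μ` with mass `ε` deleted
from its smallest points; randomising through `U` takes care of atoms. Multiplied by `1 - ε`, the
upper tails of these laws are `max (G - ε) 0` and `min G (1 - ε)`. Hence if `G_p - ε ≤ G_q`, what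
is left of `q` after deleting from the bottom dominates what is left of `p` after deleting from the
top. Dominance orders the quantile functions pointwise, and integrating them over `(0, 1)` orders
the means.
-/

open Filter ProbabilityTheory Set
open scoped Topology

theorem biInter_lt_Ici {α : Type*} [LinearOrder α] [DenselyOrdered α] (t : α) :
    ⋂ s < t, Ici s = Ici t := by
  ext x
  simpa using ⟨le_of_forall_lt_imp_le_of_dense, fun h _ hs => hs.le.trans h⟩

theorem tendsto_measure_Ici_nhdsLT {α : Type*} [LinearOrder α] [DenselyOrdered α] [NoMinOrder α]
    [TopologicalSpace α] [OrderTopology α] [FirstCountableTopology α] [MeasurableSpace α]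
    [OpensMeasurableSpace α] (μ : Measure α) [IsFiniteMeasure μ] (t : α) :
    Tendsto (fun s => μ (Ici s)) (𝓝[<] t) (𝓝 (μ (Ici t))) := by
  rw [← biInter_lt_Ici t]
  obtain ⟨s, hs⟩ := exists_lt t
  exact tendsto_measure_biInter_gt (ι := αᵒᵈ) (s := fun s => Ici (OrderDual.ofDual s))
    (fun _ _ => measurableSet_Ici.nullMeasurableSet) (fun _ _ _ h => Ici_subset_Ici.2 h)
    ⟨OrderDual.toDual s, hs, measure_ne_top μ _⟩

theorem tendsto_measure_Ici_atTop {α : Type*} [Preorder α] [IsDirectedOrder α] [Nonempty α]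
    [NoMaxOrder α] [(atTop : Filter α).IsCountablyGenerated] [TopologicalSpace α]
    [ClosedIciTopology α] [MeasurableSpace α] [OpensMeasurableSpace α] (μ : Measure α)
    [IsFiniteMeasure μ] : Tendsto (fun t => μ (Ici t)) atTop (𝓝 0) := by
  have hempty : ⋂ t : α, Ici t = ∅ :=
    eq_empty_of_forall_notMem fun x hx =>
      let ⟨t, hxt⟩ := exists_gt x
      hxt.not_ge (mem_iInter.1 hx t)
  rw [← measure_empty (μ := μ), ← hempty]
  exact tendsto_measure_iInter_atTop (fun _ => measurableSet_Ici.nullMeasurableSet)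
    antitone_Ici ⟨Classical.arbitrary α, measure_ne_top μ _⟩

/-- The quantile function of `μ` read from the top: `upperQuantile μ u` is the largest threshold
above which `μ` still has mass at least `u`. It is meaningful for `0 < u < 1`; elsewhere the
supremum may be a junk value. -/
def upperQuantile (μ : Measure ℝ) (u : ℝ) : ℝ :=
  sSup {t | u ≤ μ.real (Ici t)}

/-- The part of `μ` between its upper quantiles of levels `a` and `b`, renormalised: the law of
`upperQuantile μ U` for `U` uniform on `(a, b)`. An atom at an end point is split as needed. For
`0 ≤ a < b ≤ 1`, it arises from `μ` by deleting mass `a` from the largest points and mass `1 - b`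
from the smallest ones. -/
def quantileSlice (μ : Measure ℝ) (a b : ℝ) : Measure ℝ :=
  (volume[|Ioo a b]).map (upperQuantile μ)

theorem quantileSlice_eq_smul (μ : Measure ℝ) (a b : ℝ) :
    quantileSlice μ a b =
      (volume (Ioo a b))⁻¹ • (volume.restrict (Ioo a b)).map (upperQuantile μ) :=
  Measure.map_smul ..

section ProbabilityMeasure

variable (μ : Measure ℝ) [IsProbabilityMeasure μ]

theorem le_upperQuantile_iff {u : ℝ} (hu : u ∈ Ioo 0 1) (t : ℝ) :
    t ≤ upperQuantile μ u ↔ u ≤ μ.real (Ici t) := by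
  have hanti : Antitone fun s => μ.real (Ici s) := fun _ _ h =>
    measureReal_mono (Ici_subset_Ici.2 h)
  have htop : Tendsto (fun s => μ.real (Ici s)) atTop (𝓝 0) :=
    (ENNReal.tendsto_toReal ENNReal.zero_ne_top).comp (tendsto_measure_Ici_atTop μ)
  have hbot : Tendsto (fun s => μ.real (Ici s)) atBot (𝓝 (μ.real univ)) :=
    (ENNReal.tendsto_toReal (measure_ne_top μ _)).comp (tendsto_measure_Ici_atBot μ)
  have hleft : Tendsto (fun s => μ.real (Ici s)) (𝓝[<] t) (𝓝 (μ.real (Ici t))) :=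
    (ENNReal.tendsto_toReal (measure_ne_top μ _)).comp (tendsto_measure_Ici_nhdsLT μ t)
  have hne : {s | u ≤ μ.real (Ici s)}.Nonempty := by
    obtain ⟨s, hs⟩ := (hbot.eventually_const_lt (by simpa using hu.2)).exists
    exact ⟨s, hs.le⟩
  have hbdd : BddAbove {s | u ≤ μ.real (Ici s)} := by
    obtain ⟨m, hm⟩ := (htop.eventually_lt_const hu.1).exists
    exact ⟨m, fun s hs => le_of_not_gt fun hms => (hm.trans_le hs).not_ge (hanti hms.le)⟩
  refine ⟨fun h => ge_of_tendsto hleft ?_, fun h => le_csSup hbdd h⟩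
  filter_upwards [self_mem_nhdsWithin] with s hst
  obtain ⟨s', hs', hss'⟩ := exists_lt_of_lt_csSup hne (hst.trans_le h)
  exact hs'.trans (hanti hss'.le)

theorem antitoneOn_upperQuantile : AntitoneOn (upperQuantile μ) (Ioo 0 1) := fun _ hu _ hv huv =>
  (le_upperQuantile_iff μ hu _).2 (huv.trans ((le_upperQuantile_iff μ hv _).1 le_rfl))

theorem upperQuantile_le_upperQuantile {ν : Measure ℝ} [IsProbabilityMeasure ν]
    (h : ∀ t, μ.real (Ici t) ≤ ν.real (Ici t)) {u : ℝ} (hu : u ∈ Ioo 0 1) :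
    upperQuantile μ u ≤ upperQuantile ν u :=
  (le_upperQuantile_iff ν hu _).2 (((le_upperQuantile_iff μ hu _).1 le_rfl).trans (h _))

variable {a b : ℝ}

theorem aemeasurable_upperQuantile (ha : 0 ≤ a) (hb : b ≤ 1) :
    AEMeasurable (upperQuantile μ) (volume.restrict (Ioo a b)) :=
  aemeasurable_restrict_of_antitoneOn measurableSet_Ioo
    ((antitoneOn_upperQuantile μ).mono (Ioo_subset_Ioo ha hb))

theorem isProbabilityMeasure_quantileSlice (ha : 0 ≤ a) (hab : a < b) (hb : b ≤ 1) :
    IsProbabilityMeasure (quantileSlice μ a b) :=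
  have : IsProbabilityMeasure (volume[|Ioo a b]) :=
    cond_isProbabilityMeasure_of_finite (by simpa using hab) (by simp)
  Measure.isProbabilityMeasure_map
    ((aemeasurable_upperQuantile μ ha hb).smul_measure _)

theorem quantileSlice_real_Ici (ha : 0 ≤ a) (hab : a ≤ b) (hb : b ≤ 1) (t : ℝ) :
    (quantileSlice μ a b).real (Ici t) = max (min b (μ.real (Ici t)) - a) 0 / (b - a) := by
  have hpreimage : upperQuantile μ ⁻¹' Ici t ∩ Ioo a b = Ioo a b ∩ Iic (μ.real (Ici t)) := by
    ext u
    simp only [mem_inter_iff, mem_preimage, mem_Ici, mem_Iic, and_comm (b := u ∈ Ioo a b)]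
    exact and_congr_right fun hu => le_upperQuantile_iff μ (Ioo_subset_Ioo ha hb hu) t
  have hvolume : volume.real (Ioo a b ∩ Iic (μ.real (Ici t))) =
      max (min b (μ.real (Ici t)) - a) 0 :=
    calc volume.real (Ioo a b ∩ Iic (μ.real (Ici t)))
        = volume.real (Ioc a b ∩ Iic (μ.real (Ici t))) :=
          measureReal_congr (ae_eq_set_inter Ioo_ae_eq_Ioc (ae_eq_refl _))
      _ = max (min b (μ.real (Ici t)) - a) 0 := by rw [Ioc_inter_Iic, Real.volume_real_Ioc]
  rw [quantileSlice_eq_smul, measureReal_ennreal_smul_apply,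
    map_measureReal_apply_of_aemeasurable (aemeasurable_upperQuantile μ ha hb) measurableSet_Ici,
    measureReal_restrict_apply' measurableSet_Ioo, hpreimage, hvolume]
  simp [hab, div_eq_inv_mul]

theorem map_upperQuantile : (volume.restrict (Ioo 0 1)).map (upperQuantile μ) = μ := by
  have hslice : quantileSlice μ 0 1 = μ := by
    have := isProbabilityMeasure_quantileSlice μ le_rfl zero_lt_one le_rfl
    refine Measure.ext_of_Ici _ _ fun t => (measureReal_eq_measureReal_iff).1 ?_
    simp [quantileSlice_real_Ici μ le_rfl zero_le_one le_rfl, measureReal_le_one]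
  simpa [quantileSlice_eq_smul] using hslice

theorem quantileSlice_le_smul (ha : 0 ≤ a) (hb : b ≤ 1) :
    quantileSlice μ a b ≤ (volume (Ioo a b))⁻¹ • μ := by
  rw [quantileSlice_eq_smul]
  have hmap : (volume.restrict (Ioo a b)).map (upperQuantile μ) ≤ μ := calc
    (volume.restrict (Ioo a b)).map (upperQuantile μ)
      ≤ (volume.restrict (Ioo 0 1)).map (upperQuantile μ) :=
        Measure.map_mono_of_aemeasurable (Measure.restrict_mono (Ioo_subset_Ioo ha hb) le_rfl)
          (aemeasurable_upperQuantile μ le_rfl le_rfl)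
    _ = μ := map_upperQuantile μ
  gcongr

theorem isDeletion_quantileSlice {η : ℝ} (ha : 0 ≤ a) (hab : a < b) (hb : b ≤ 1)
    (hη : b - a = 1 - η) : IsDeletion (quantileSlice μ a b) μ η := by
  intro A _
  have hvolume : volume (Ioo a b) ≠ 0 := by simpa using hab
  calc (quantileSlice μ a b A).toReal
      ≤ ((volume (Ioo a b))⁻¹ * μ A).toReal :=
        ENNReal.toReal_mono (ENNReal.mul_ne_top (ENNReal.inv_ne_top.2 hvolume) (measure_ne_top μ A))
          (quantileSlice_le_smul μ ha hb A)
    _ = (μ A).toReal / (1 - η) := by simp [← hη, hab.le, div_eq_inv_mul]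

theorem integrable_quantileSlice {E : Type*} [NormedAddCommGroup E] {f : ℝ → E}
    (hf : Integrable f μ) (ha : 0 ≤ a) (hab : a < b) (hb : b ≤ 1) :
    Integrable f (quantileSlice μ a b) :=
  (hf.smul_measure (by simpa using hab)).mono_measure (quantileSlice_le_smul μ ha hb)

theorem integrableOn_comp_upperQuantile {E : Type*} [NormedAddCommGroup E] {f : ℝ → E}
    (hf : Integrable f μ) : IntegrableOn (fun u => f (upperQuantile μ u)) (Ioo 0 1) := by
  rw [← map_upperQuantile μ] at hf
  exact hf.comp_aemeasurable (aemeasurable_upperQuantile μ le_rfl le_rfl)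

theorem setIntegral_comp_upperQuantile {E : Type*} [NormedAddCommGroup E] [NormedSpace ℝ E]
    {f : ℝ → E} (hf : AEStronglyMeasurable f μ) :
    ∫ u in Ioo 0 1, f (upperQuantile μ u) = ∫ x, f x ∂μ := by
  conv_rhs => rw [← map_upperQuantile μ]
  rw [← map_upperQuantile μ] at hf
  exact (integral_map (aemeasurable_upperQuantile μ le_rfl le_rfl) hf).symm

end ProbabilityMeasure

section Dominance

variable {p q : Measure ℝ} [IsProbabilityMeasure p] [IsProbabilityMeasure q]

theorem integral_le_integral_of_real_Ici_le (h : ∀ t, p.real (Ici t) ≤ q.real (Ici t))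
    {f : ℝ → ℝ} (hf : Monotone f) (hp : Integrable f p) (hq : Integrable f q) :
    ∫ x, f x ∂p ≤ ∫ x, f x ∂q :=
  calc ∫ x, f x ∂p
      = ∫ u in Ioo 0 1, f (upperQuantile p u) := (setIntegral_comp_upperQuantile p hp.1).symm
    _ ≤ ∫ u in Ioo 0 1, f (upperQuantile q u) :=
        setIntegral_mono_on (integrableOn_comp_upperQuantile p hp)
          (integrableOn_comp_upperQuantile q hq) measurableSet_Ioo
          fun _ hu => hf (upperQuantile_le_upperQuantile p h hu)
    _ = ∫ x, f x ∂q := setIntegral_comp_upperQuantile q hq.1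

theorem quantileSlice_real_Ici_le {ε t : ℝ} (hε : ε ∈ Icc 0 1)
    (h : p.real (Ici t) - q.real (Ici t) ≤ ε) :
    (quantileSlice p ε 1).real (Ici t) ≤ (quantileSlice q 0 (1 - ε)).real (Ici t) := by
  obtain ⟨hε0, hε1⟩ := hε
  have htail : min 1 (p.real (Ici t)) - ε ≤ min (1 - ε) (q.real (Ici t)) :=
    le_min (by linarith [min_le_left 1 (p.real (Ici t))])
      (by linarith [min_le_right 1 (p.real (Ici t))])
  rw [quantileSlice_real_Ici p hε0 hε1 le_rfl,
    quantileSlice_real_Ici q le_rfl (sub_nonneg.2 hε1) (sub_le_self 1 hε0), sub_zero, sub_zero]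
  gcongr

theorem deletion_stochastic_dominance_of_KS_close_general
    (p q : Measure ℝ) [IsProbabilityMeasure p] [IsProbabilityMeasure q]
    (ε : ℝ) (hε : ε ∈ Ico (0 : ℝ) 1)
    (hKS : ∀ t : ℝ, p.real (Ici t) - q.real (Ici t) ≤ ε) :
    ∃ rp rq : Measure ℝ, IsProbabilityMeasure rp ∧ IsProbabilityMeasure rq ∧
      IsDeletion rp p ε ∧ IsDeletion rq q ε ∧
      (∀ t : ℝ, rp.real (Ici t) ≤ rq.real (Ici t)) ∧
      ∀ f : ℝ → ℝ, Monotone f → Integrable f p → Integrable f q →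
        Integrable f rp ∧ Integrable f rq ∧ ∫ x, f x ∂rp ≤ ∫ x, f x ∂rq := by
  obtain ⟨hε0, hε1⟩ := hε
  have hδ1 : 1 - ε ≤ 1 := sub_le_self 1 hε0
  have hδ0 : 0 < 1 - ε := sub_pos.2 hε1
  have hrp := isProbabilityMeasure_quantileSlice p hε0 hε1 le_rfl
  have hrq := isProbabilityMeasure_quantileSlice q le_rfl hδ0 hδ1
  have hdom (t : ℝ) : (quantileSlice p ε 1).real (Ici t) ≤
      (quantileSlice q 0 (1 - ε)).real (Ici t) :=
    quantileSlice_real_Ici_le ⟨hε0, hε1.le⟩ (hKS t)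
  refine ⟨quantileSlice p ε 1, quantileSlice q 0 (1 - ε), hrp, hrq,
    isDeletion_quantileSlice p hε0 hε1 le_rfl rfl,
    isDeletion_quantileSlice q le_rfl hδ0 hδ1 (sub_zero _), hdom, fun f hf hp hq => ?_⟩
  have hfrp := integrable_quantileSlice p hp hε0 hε1 le_rfl
  have hfrq := integrable_quantileSlice q hq le_rfl hδ0 hδ1
  exact ⟨hfrp, hfrq, integral_le_integral_of_real_Ici_le hdom hf hfrp hfrq⟩

end Dominance

/-- If two distributions on `ℝ` with finite first moments are `ε`-close in Kolmogorov–Smirnov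
distance (`sup_t |P_p̃(Y ≥ t) - P_q̃(Y ≥ t)| ≤ ε`, `ε ∈ [0,1)`) then there are `ε`-deletions
`r̃_p ≤ p̃/(1-ε)` and `r̃_q ≤ q̃/(1-ε)` such that `r̃_q` stochastically dominates `r̃_p`, and
consequently `E_{r̃_p}[Y] ≤ E_{r̃_q}[Y]`. -/
theorem deletion_stochastic_dominance_of_KS_close
    (ptil qtil : Measure ℝ) [IsProbabilityMeasure ptil] [IsProbabilityMeasure qtil]
    (hp : Integrable (fun x : ℝ => x) ptil) (hq : Integrable (fun x : ℝ => x) qtil)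
    (ε : ℝ) (hε : ε ∈ Set.Ico (0 : ℝ) 1)
    (hKS : ∀ t : ℝ, |(ptil (Set.Ici t)).toReal - (qtil (Set.Ici t)).toReal| ≤ ε) :
    ∃ (rp rq : Measure ℝ), IsProbabilityMeasure rp ∧ IsProbabilityMeasure rq ∧
      IsDeletion rp ptil ε ∧ IsDeletion rq qtil ε ∧
      Integrable (fun x : ℝ => x) rp ∧ Integrable (fun x : ℝ => x) rq ∧
      (∀ t : ℝ, (rp (Set.Ici t)).toReal ≤ (rq (Set.Ici t)).toReal) ∧
      (∫ x, x ∂rp) ≤ ∫ x, x ∂rq := by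
  obtain ⟨rp, rq, hrp, hrq, hdp, hdq, hdom, hmono⟩ :=
    deletion_stochastic_dominance_of_KS_close_general ptil qtil ε hε
      fun t => (le_abs_self _).trans (hKS t)
  obtain ⟨hip, hiq, hmean⟩ := hmono (fun x => x) monotone_id hp hq
  exact ⟨rp, rq, hrp, hrq, hdp, hdq, hip, hiq, hdom, hmean⟩
end
end
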